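/- arXiv:2501.10170 — 2 statements merged into one kernel-verified Lean document; each statement's English description precedes it below -/
import Mathlib

section
/- Let A be a real m×n matrix with full column rank, q ∈ ℝ^m, and let λ_max > 0 denote the largest eigenvalue of Aᵀ A. For any fixed global weight μ with 0 < μ < 2/λ_max, the standard LSPIA iteration p^{(k+1)} = p^{(k)} − μ Aᵀ(A p^{(k)} − q), started from any p^{(0)} ∈ ℝ^n, converges to the unique least squares solution p* = (Aᵀ A)^{-1} Aᵀ q, and hence the fitting error E(p^{(k)}) = (1/2)‖A p^{(k)} − q‖₂² converges to the minimum value of E. -/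
open Matrix Filter

/-!
Put `M = Aᵀ A`, which is positive definite because `A` is injective, and `p* = M⁻¹ Aᵀ q`, so that
the normal equation `M p* = Aᵀ q` holds. The error `e k = p k - p*` then satisfies
`e (k + 1) = (1 - μ M) (e k)`. Expanding `e 0` in an orthonormal eigenbasis of `M`, the coefficient
along the eigenvector with eigenvalue `l` is multiplied by `1 - μ l` at each step, and
`0 < l ≤ lmax` together with `0 < μ < 2 / lmax` gives `|1 - μ l| < 1`; hence `e k → 0`.
The error functional `E` is continuous, so `E (p k) → E p*`. By the normal equation the residual
`A p* - q` is orthogonal to the range of `A`, so `E p*` is the minimum of `E`.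
-/

/-- A fixed-step gradient iteration for a symmetric matrix `M` tends to zero when every eigenvalue
`l` of `M` satisfies `|1 - μ l| < 1`. -/
lemma tendsto_zero_of_eigenvalues {n : ℕ} {M : Matrix (Fin n) (Fin n) ℝ} (hM : M.IsHermitian)
    {μ : ℝ} (hμ : ∀ i, |1 - μ * hM.eigenvalues i| < 1) {e : ℕ → Fin n → ℝ}
    (he : ∀ k, e (k + 1) = e k - μ • M *ᵥ e k) : Tendsto e atTop (nhds 0) := by
  set v : Fin n → Fin n → ℝ := fun i => WithLp.ofLp (hM.eigenvectorBasis i) with hv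
  obtain ⟨c, hc⟩ : ∃ c : Fin n → ℝ, e 0 = ∑ i, c i • v i := by
    refine ⟨fun i => hM.eigenvectorBasis.repr (WithLp.toLp 2 (e 0)) i, ?_⟩
    have h := congrArg WithLp.ofLp (hM.eigenvectorBasis.sum_repr (WithLp.toLp 2 (e 0)))
    simpa [hv, WithLp.ofLp_sum] using h.symm
  have key : ∀ k, e k = ∑ i, ((1 - μ * hM.eigenvalues i) ^ k * c i) • v i := by
    intro k
    induction k with
    | zero => simpa using hc
    | succ k ih =>
      rw [he, ih, Matrix.mulVec_sum, Finset.smul_sum, ← Finset.sum_sub_distrib]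
      refine Finset.sum_congr rfl fun i _ => ?_
      have h : M *ᵥ v i = hM.eigenvalues i • v i := hM.mulVec_eigenvectorBasis i
      rw [Matrix.mulVec_smul, h]
      module
  have hlim : Tendsto (fun k => ∑ i, ((1 - μ * hM.eigenvalues i) ^ k * c i) • v i) atTop
      (nhds (∑ i, ((0 : ℝ) * c i) • v i)) :=
    tendsto_finsetSum _ fun i _ =>
      ((tendsto_pow_atTop_nhds_zero_of_abs_lt_one (hμ i)).mul_const (c i)).smul_const (v i)
  simpa [← key] using hlim

theorem lspia_convergence (m n : ℕ) (A : Matrix (Fin m) (Fin n) ℝ) (q : Fin m → ℝ)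
    (hA : Function.Injective A.mulVec)
    (lmax : ℝ) (hlmax : IsGreatest (spectrum ℝ (Aᵀ * A)) lmax) (hlpos : 0 < lmax)
    (μ : ℝ) (hμ0 : 0 < μ) (hμ2 : μ < 2 / lmax)
    (p : ℕ → Fin n → ℝ)
    (hp : ∀ k, p (k + 1) = p k - μ • Aᵀ.mulVec (A.mulVec (p k) - q))
    (E : (Fin n → ℝ) → ℝ)
    (hE : ∀ x, E x = (1 / 2) * ∑ j, (A.mulVec x j - q j) ^ 2) :
    Tendsto p atTop (nhds ((Aᵀ * A)⁻¹.mulVec (Aᵀ.mulVec q))) ∧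
      Tendsto (fun k => E (p k)) atTop (nhds (⨅ x, E x)) := by
  have hpd : (Aᵀ * A).PosDef := by
    simpa using Matrix.PosDef.conjTranspose_mul_self A hA
  set s := (Aᵀ * A)⁻¹.mulVec (Aᵀ.mulVec q) with hs
  have hnormal : (Aᵀ * A) *ᵥ s = Aᵀ *ᵥ q := by
    rw [hs, Matrix.mulVec_mulVec, Matrix.mul_nonsing_inv _ (Ne.isUnit hpd.det_pos.ne'),
      Matrix.one_mulVec]
  have hμ : ∀ i, |1 - μ * hpd.isHermitian.eigenvalues i| < 1 := by
    intro i
    have h0 : 0 < hpd.isHermitian.eigenvalues i := hpd.eigenvalues_pos i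
    have h1 : hpd.isHermitian.eigenvalues i ≤ lmax :=
      hlmax.2 (hpd.isHermitian.eigenvalues_mem_spectrum_real i)
    have h2 : μ * lmax < 2 := (lt_div_iff₀ hlpos).1 hμ2
    have h3 := mul_pos hμ0 h0
    have h4 := mul_le_mul_of_nonneg_left h1 hμ0.le
    rw [abs_lt]
    constructor <;> linarith
  have herr : Tendsto (fun k => p k - s) atTop (nhds 0) := by
    refine tendsto_zero_of_eigenvalues hpd.isHermitian hμ fun k => ?_
    rw [hp, Matrix.mulVec_sub, Matrix.mulVec_sub, hnormal, Matrix.mulVec_mulVec]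
    abel
  have hlim : Tendsto p atTop (nhds s) := by
    simpa using herr.add_const s
  refine ⟨hlim, ?_⟩
  have hmin : ∀ x, E s ≤ E x := by
    intro x
    have horth : (A *ᵥ (x - s)) ⬝ᵥ (A *ᵥ s - q) = 0 := by
      rw [dotProduct_comm, Matrix.dotProduct_mulVec, ← Matrix.mulVec_transpose, Matrix.mulVec_sub,
        Matrix.mulVec_mulVec, hnormal, sub_self, zero_dotProduct]
    have hexp : ∑ j, (A.mulVec x j - q j) ^ 2 = ∑ j, (A.mulVec s j - q j) ^ 2
        + 2 * ((A *ᵥ (x - s)) ⬝ᵥ (A *ᵥ s - q)) + ∑ j, (A *ᵥ (x - s)) j ^ 2 := by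
      simp only [dotProduct, Finset.mul_sum, ← Finset.sum_add_distrib, Matrix.mulVec_sub,
        Pi.sub_apply]
      exact Finset.sum_congr rfl fun j _ => by ring
    have hsq : 0 ≤ ∑ j, (A *ᵥ (x - s)) j ^ 2 := Finset.sum_nonneg fun j _ => sq_nonneg _
    rw [hE, hE, hexp]
    linarith
  have hinf : ⨅ x, E x = E s :=
    le_antisymm (ciInf_le ⟨E s, Set.forall_mem_range.2 hmin⟩ s) (le_ciInf hmin)
  have hcont : Continuous E := by
    rw [funext hE]
    have hAc : Continuous fun x : Fin n → ℝ => A *ᵥ x := continuous_const.matrix_mulVec continuous_id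
    fun_prop
  rw [hinf]
  exact (hcont.tendsto s).comp hlim
end

section
/- Let A be a real m×n matrix with full column rank, q ∈ ℝ^m, and E(p) = (1/2)‖A p − q‖₂². Fix μ > 0 and ε > 0 and define the AdagradLSPIA iteration: p^{(0)} ∈ ℝ^n arbitrary, g^{(k)} = Aᵀ(A p^{(k)} − q), v_i^{(0)} = 0, v_i^{(k+1)} = v_i^{(k)} + (g_i^{(k)})², and p_i^{(k+1)} = p_i^{(k)} − (μ/√(ε + v_i^{(k+1)})) g_i^{(k)} for each coordinate i. Then for all sufficiently small μ (e.g. μ ≤ √ε / λ_max, where λ_max is the largest eigenvalue of Aᵀ A), the sequence (p^{(k)}) converges to the unique minimizer p* = (Aᵀ A)^{-1} Aᵀ q of E, and E(p^{(k)}) converges to min E. -/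
/-!
The proof is a descent argument. Every weight satisfies `0 < μᵢ ≤ μ/√ε ≤ 1/λ_max`, so the exact
second-order expansion of `E` (`energy_expansion`) and the Rayleigh bound
`‖A d‖² ≤ λ_max ‖d‖²` (`dotProduct_mulVec_le_of_isGreatest`) show that one step decreases `E` by at
least `½ ∑ᵢ μᵢ gᵢ²`. As `E ≥ 0`, the series `∑ₖ (g_i^{(k)})²/√(ε + v_i^{(k+1)})` has bounded partial
sums. Its `K`-th partial sum is at least `v_i^{(K)}/√(ε + v_i^{(K)})`, because `v_i` is nondecreasing
with increments `(g_i^{(k)})²`; hence `v_i` is bounded (`tendsto_zero_of_adagrad_sum_le`). So `v_i`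
converges and its increments tend to zero, i.e. `g^{(k)} → 0`. Finally
`p^{(k)} = p* + (AᵀA)⁻¹ g^{(k)}` gives `p^{(k)} → p*`, and continuity of `E` gives the convergence
of the values.
-/

open Matrix Filter

/-- Rayleigh bound: if `l` is the largest eigenvalue of `AᵀA`, then `‖A d‖² ≤ l ‖d‖²`. It holds
because `l • 1 - AᵀA` is symmetric with nonnegative spectrum. -/
lemma dotProduct_mulVec_le_of_isGreatest {m n : ℕ} (A : Matrix (Fin m) (Fin n) ℝ) {l : ℝ}
    (hl : IsGreatest (spectrum ℝ (Aᵀ * A)) l) (d : Fin n → ℝ) :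
    A *ᵥ d ⬝ᵥ A *ᵥ d ≤ l * (d ⬝ᵥ d) := by
  have hH : (algebraMap ℝ (Matrix (Fin n) (Fin n) ℝ) l - Aᵀ * A).IsHermitian := by
    rw [Matrix.IsHermitian, conjTranspose_eq_transpose_of_trivial]
    simp [Matrix.algebraMap_eq_diagonal]
  have hP : (algebraMap ℝ (Matrix (Fin n) (Fin n) ℝ) l - Aᵀ * A).PosSemidef := by
    rw [hH.posSemidef_iff_eigenvalues_nonneg]
    intro i
    have hi := hH.eigenvalues_mem_spectrum_real i
    rw [← spectrum.singleton_sub_eq, Set.mem_sub] at hi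
    obtain ⟨x, hx, y, hy, hxy⟩ := hi
    have hyl := hl.2 hy
    rw [Set.mem_singleton_iff] at hx
    simp only [Pi.zero_apply]
    linarith
  have h := hP.dotProduct_mulVec_nonneg d
  have h2 : d ⬝ᵥ (Aᵀ * A) *ᵥ d = A *ᵥ d ⬝ᵥ A *ᵥ d := by
    rw [← mulVec_mulVec, dotProduct_mulVec, vecMul_transpose]
  rw [sub_mulVec, dotProduct_sub, star_trivial, h2, Algebra.algebraMap_eq_smul_one,
    smul_mulVec, one_mulVec, dotProduct_smul, smul_eq_mul] at h
  linarith

/-- Exact second-order Taylor expansion of the quadratic energy at `x`. -/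
lemma energy_expansion {m n : ℕ} (A : Matrix (Fin m) (Fin n) ℝ) (q : Fin m → ℝ)
    (E : (Fin n → ℝ) → ℝ) (hE : ∀ x, E x = (1 / 2) * ∑ j, (A.mulVec x j - q j) ^ 2)
    (x d : Fin n → ℝ) :
    E (x + d) = E x + d ⬝ᵥ Aᵀ *ᵥ (A *ᵥ x - q) + (1 / 2) * (A *ᵥ d ⬝ᵥ A *ᵥ d) := by
  rw [dotProduct_mulVec, vecMul_transpose, hE, hE, mulVec_add]
  simp only [dotProduct, Finset.mul_sum, ← Finset.sum_add_distrib, Pi.add_apply, Pi.sub_apply]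
  refine Finset.sum_congr rfl fun j _ => ?_
  ring

/-- Scalar Adagrad estimate: if the sums `∑ γₖ² / √(ε + vₖ₊₁)` are bounded, where `v` accumulates
the `γₖ²`, then `v` is bounded and therefore `γ → 0`. -/
lemma tendsto_zero_of_adagrad_sum_le {ε C : ℝ} (hε : 0 < ε) {γ v : ℕ → ℝ} (hv0 : v 0 = 0)
    (hv : ∀ k, v (k + 1) = v k + γ k ^ 2)
    (hC : ∀ K, ∑ k ∈ Finset.range K, γ k ^ 2 / √(ε + v (k + 1)) ≤ C) :
    Tendsto γ atTop (nhds 0) := by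
  have hmono : Monotone v := monotone_nat_of_le_succ fun k => by
    rw [hv]; nlinarith [sq_nonneg (γ k)]
  have hnn : ∀ k, 0 ≤ v k := fun k => hv0 ▸ hmono (Nat.zero_le k)
  have hsum : ∀ K, v K = ∑ k ∈ Finset.range K, γ k ^ 2 := by
    intro K
    induction K with
    | zero => simpa using hv0
    | succ K ih => rw [Finset.sum_range_succ, hv, ih]
  have hpos : ∀ k, 0 < √(ε + v k) := fun k => Real.sqrt_pos.2 (by linarith [hnn k])
  have hlow : ∀ K, v K ≤ C * √(ε + v K) := by
    intro K
    rw [← div_le_iff₀ (hpos K)]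
    refine le_trans ?_ (hC K)
    nth_rewrite 1 [hsum K]
    rw [Finset.sum_div]
    refine Finset.sum_le_sum fun k hk => ?_
    have hkK : v (k + 1) ≤ v K := hmono (Finset.mem_range.1 hk)
    have := hpos (k + 1)
    gcongr
  -- `v² ≤ C² (ε + v) ≤ C² ε + (C⁴ + v²) / 2`, so `v² ≤ 2 C² ε + C⁴`; moreover `v ≤ v² + 1`.
  have hbdd : ∀ K, v K ≤ 2 * C ^ 2 * ε + C ^ 4 + 1 := by
    intro K
    have hsq : √(ε + v K) ^ 2 = ε + v K := Real.sq_sqrt (by linarith [hnn K])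
    have h1 : v K ^ 2 ≤ C ^ 2 * (ε + v K) := by
      calc v K ^ 2 ≤ (C * √(ε + v K)) ^ 2 := pow_le_pow_left₀ (hnn K) (hlow K) 2
        _ = C ^ 2 * (ε + v K) := by rw [mul_pow, hsq]
    nlinarith [sq_nonneg (C ^ 2 - v K), sq_nonneg (v K - 1)]
  have hlim := tendsto_atTop_ciSup hmono ⟨_, Set.forall_mem_range.2 hbdd⟩
  have hdiff := ((tendsto_add_atTop_iff_nat 1).2 hlim).sub hlim
  have hsq : Tendsto (fun k => γ k ^ 2) atTop (nhds 0) := by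
    simpa [hv] using hdiff
  have habs := hsq.sqrt
  simp only [Real.sqrt_sq_eq_abs, Real.sqrt_zero] at habs
  exact (tendsto_zero_iff_abs_tendsto_zero _).2 habs

/-- If `A` has full column rank, then for all sufficiently small global weights `μ`
(namely `μ ≤ √ε / λ_max` where `λ_max` is the largest eigenvalue of `Aᵀ A`), the
AdagradLSPIA iteration `p_i^{(k+1)} = p_i^{(k)} − (μ/√(ε + v_i^{(k+1)})) g_i^{(k)}`
with `g^{(k)} = Aᵀ(A p^{(k)} − q)`, `v_i^{(0)} = 0`, `v_i^{(k+1)} = v_i^{(k)} + (g_i^{(k)})²`,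
converges to the unique minimizer `p* = (Aᵀ A)⁻¹ Aᵀ q` of `E(p) = (1/2)‖A p − q‖₂²`,
and `E(p^{(k)})` converges to `min E`. -/
theorem adagrad_lspia_convergence (m n : ℕ) (A : Matrix (Fin m) (Fin n) ℝ) (q : Fin m → ℝ)
    (hA : Function.Injective A.mulVec)
    (lmax : ℝ) (hlmax : IsGreatest (spectrum ℝ (Aᵀ * A)) lmax)
    (μ ε : ℝ) (hμ0 : 0 < μ) (hε : 0 < ε) (hμsmall : μ ≤ Real.sqrt ε / lmax)
    (p : ℕ → Fin n → ℝ) (g : ℕ → Fin n → ℝ)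
    (hg : ∀ k, g k = Aᵀ.mulVec (A.mulVec (p k) - q))
    (v : ℕ → Fin n → ℝ) (hv0 : v 0 = 0)
    (hv : ∀ k i, v (k + 1) i = v k i + (g k i) ^ 2)
    (hp : ∀ k i, p (k + 1) i = p k i - μ / Real.sqrt (ε + v (k + 1) i) * g k i)
    (E : (Fin n → ℝ) → ℝ)
    (hE : ∀ x, E x = (1 / 2) * ∑ j, (A.mulVec x j - q j) ^ 2) :
    Tendsto p atTop (nhds ((Aᵀ * A)⁻¹.mulVec (Aᵀ.mulVec q))) ∧
      Tendsto (fun k => E (p k)) atTop (nhds (⨅ x, E x)) := by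
  -- Positivity of `lmax`: otherwise `√ε / lmax ≤ 0 < μ`, also when `lmax = 0`.
  have hl : 0 < lmax := by
    by_contra! h
    exact absurd (hμ0.trans_le hμsmall)
      (not_lt.2 (div_nonpos_of_nonneg_of_nonpos (Real.sqrt_nonneg _) h))
  have hunit : IsUnit (Aᵀ * A).det := by
    rw [← isUnit_iff_isUnit_det, ← conjTranspose_eq_transpose_of_trivial]
    exact (PosDef.conjTranspose_mul_self A hA).isUnit
  have hvnn : ∀ k i, 0 ≤ v k i := by
    intro k i
    induction k with
    | zero => simp [hv0]
    | succ k ih => rw [hv]; positivity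
  have hE0 : ∀ x, 0 ≤ E x := fun x => by rw [hE]; positivity
  have hdesc : ∀ k, (μ / 2) * ∑ i, g k i ^ 2 / √(ε + v (k + 1) i) ≤ E (p k) - E (p (k + 1)) := by
    intro k
    set d : Fin n → ℝ := fun i => -(μ / √(ε + v (k + 1) i) * g k i) with hd
    have hstep : p (k + 1) = p k + d := by
      ext i
      rw [hp, Pi.add_apply, hd]
      ring
    have hexp := energy_expansion A q E hE (p k) d
    rw [← hstep, ← hg] at hexp
    have hray := dotProduct_mulVec_le_of_isGreatest A hlmax d
    have hlin : d ⬝ᵥ g k = -(μ * ∑ i, g k i ^ 2 / √(ε + v (k + 1) i)) := by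
      simp only [dotProduct, hd, Finset.mul_sum, ← Finset.sum_neg_distrib]
      refine Finset.sum_congr rfl fun i _ => ?_
      ring
    have hquad : lmax * (d ⬝ᵥ d) ≤ μ * ∑ i, g k i ^ 2 / √(ε + v (k + 1) i) := by
      simp only [dotProduct, hd, Finset.mul_sum]
      refine Finset.sum_le_sum fun i _ => ?_
      have hs : √ε ≤ √(ε + v (k + 1) i) := Real.sqrt_le_sqrt (by linarith [hvnn (k + 1) i])
      have hs0 : 0 < √(ε + v (k + 1) i) := (Real.sqrt_pos.2 hε).trans_le hs
      -- The weight is at most `1 / lmax`.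
      have hw : lmax * (μ / √(ε + v (k + 1) i)) ≤ 1 := by
        rw [le_div_iff₀ hl] at hμsmall
        rw [← mul_div_assoc, div_le_one hs0]
        linarith
      have hnn : 0 ≤ μ * (g k i ^ 2 / √(ε + v (k + 1) i)) := by positivity
      calc _ = lmax * (μ / √(ε + v (k + 1) i)) * (μ * (g k i ^ 2 / √(ε + v (k + 1) i))) := by ring
        _ ≤ 1 * (μ * (g k i ^ 2 / √(ε + v (k + 1) i))) := by gcongr
        _ = _ := one_mul _
    linarith
  have hgi : ∀ i, Tendsto (fun k => g k i) atTop (nhds 0) := by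
    intro i
    refine tendsto_zero_of_adagrad_sum_le (C := E (p 0) / (μ / 2)) (v := fun k => v k i) hε
      (by simp [hv0]) (fun k => hv k i) fun K => ?_
    rw [le_div_iff₀ (by positivity), mul_comm, Finset.mul_sum]
    calc _ ≤ ∑ k ∈ Finset.range K, (E (p k) - E (p (k + 1))) := by
          refine Finset.sum_le_sum fun k _ => le_trans ?_ (hdesc k)
          have := Finset.single_le_sum (f := fun i => g k i ^ 2 / √(ε + v (k + 1) i))
            (fun j _ => by positivity) (Finset.mem_univ i)
          gcongr
      _ = E (p 0) - E (p K) := Finset.sum_range_sub' (fun k => E (p k)) K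
      _ ≤ E (p 0) := by linarith [hE0 (p K)]
  have hg0 : Tendsto g atTop (nhds 0) := tendsto_pi_nhds.2 hgi
  have hpg : ∀ k, p k = (Aᵀ * A)⁻¹ *ᵥ (Aᵀ *ᵥ q) + (Aᵀ * A)⁻¹ *ᵥ g k := by
    intro k
    rw [← mulVec_add, hg, mulVec_sub, add_sub_cancel, mulVec_mulVec, mulVec_mulVec,
      Matrix.mul_assoc, nonsing_inv_mul _ hunit, one_mulVec]
  have hlimp : Tendsto p atTop (nhds ((Aᵀ * A)⁻¹ *ᵥ (Aᵀ *ᵥ q))) := by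
    have hc : Continuous fun x : Fin n → ℝ =>
        (Aᵀ * A)⁻¹ *ᵥ (Aᵀ *ᵥ q) + (Aᵀ * A)⁻¹ *ᵥ x := by fun_prop
    have h := (hc.tendsto 0).comp hg0
    rw [mulVec_zero, add_zero] at h
    exact h.congr fun k => (hpg k).symm
  refine ⟨hlimp, ?_⟩
  have hcrit : Aᵀ *ᵥ (A *ᵥ ((Aᵀ * A)⁻¹ *ᵥ (Aᵀ *ᵥ q)) - q) = 0 := by
    rw [mulVec_sub, mulVec_mulVec, mulVec_mulVec, mul_nonsing_inv _ hunit, one_mulVec, sub_self]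
  have hmin : ⨅ x, E x = E ((Aᵀ * A)⁻¹ *ᵥ (Aᵀ *ᵥ q)) := by
    refine le_antisymm (ciInf_le ⟨0, Set.forall_mem_range.2 hE0⟩ _) (le_ciInf fun x => ?_)
    have h := energy_expansion A q E hE ((Aᵀ * A)⁻¹ *ᵥ (Aᵀ *ᵥ q))
      (x - (Aᵀ * A)⁻¹ *ᵥ (Aᵀ *ᵥ q))
    rw [hcrit, dotProduct_zero, add_zero, add_sub_cancel] at h
    rw [h]
    have : 0 ≤ A *ᵥ (x - (Aᵀ * A)⁻¹ *ᵥ (Aᵀ *ᵥ q)) ⬝ᵥ A *ᵥ (x - (Aᵀ * A)⁻¹ *ᵥ (Aᵀ *ᵥ q)) :=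
      Finset.sum_nonneg fun j _ => mul_self_nonneg _
    linarith
  rw [hmin]
  have hEc : Continuous E := by
    rw [funext hE]
    fun_prop
  exact (hEc.tendsto _).comp hlimp
end
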